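/- arXiv:2506.12463 — 5 statements merged into one kernel-verified Lean document; each statement's English description precedes it below -/
import Mathlib

section
/- Let n ≥ 1, let W be an n×n real row-stochastic matrix, and let Θ = diag(θ) with θ_i ∈ [0,1] for all i. Assume that for every agent i, either θ_i > 0 or there exist k ≥ 1 and an agent j with θ_j > 0 such that (W^k)_{ij} > 0. Then for every initial vector x₀ ∈ ℝⁿ, the sequence defined by x(0) = x₀ and x(t+1) = (I − Θ)W x(t) + Θ x₀ converges, as t → ∞, to P x₀, where P = (I − (I − Θ)W)^{-1} Θ. -/
open Matrix Finset

/-!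
Write `A = (1 - Θ) W`. The vector `A ^ k *ᵥ 1` of row sums of `A ^ k` is antitone in `k`, and a walk
of length `k` in `W` from `i` to an agent whose row sum in `A` is below `1` pushes its `i`-th
coordinate below `1` at time `k + 1`. As there are finitely many agents, some power of `A` has all
row sums below `1`, so it contracts the sup norm and `A ^ t → 0`. Hence `1 - A` is invertible,
`p = (1 - A)⁻¹ Θ x₀` is the fixed point of the dynamics, and `x t - p = A ^ t (x 0 - p) → 0`.
-/

open Filter Topology

section RowSums

theorem exists_pos_and_pos_of_mul_apply_pos {l m n R : Type*} [Fintype m] [Semiring R]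
    [LinearOrder R] [IsStrictOrderedRing R] {A : Matrix l m R} {B : Matrix m n R}
    (hA : ∀ i j, 0 ≤ A i j) {i : l} {j : n} (hij : 0 < (A * B) i j) :
    ∃ k, 0 < A i k ∧ 0 < B k j := by
  obtain ⟨k, -, hk⟩ : ∃ k ∈ univ, 0 < A i k * B k j :=
    exists_lt_of_sum_lt (by simpa [mul_apply] using hij)
  exact ⟨k, (hA i k).lt_of_ne' (left_ne_zero_of_mul hk.ne'), pos_of_mul_pos_right hk (hA i k)⟩

theorem mulVec_one_le_one_of_le {m n R : Type*} [Fintype n] [Semiring R] [PartialOrder R]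
    [IsOrderedRing R] {A W : Matrix m n R} (hAW : ∀ i j, A i j ≤ W i j) (hW1 : W *ᵥ 1 ≤ 1) :
    A *ᵥ 1 ≤ 1 := fun i =>
  (dotProduct_le_dotProduct_of_nonneg_right (hAW i) zero_le_one).trans (hW1 i)

variable {ι R : Type*} [Fintype ι] [DecidableEq ι]

theorem antitone_pow_mulVec_one [Semiring R] [PartialOrder R] [IsOrderedRing R] {A : Matrix ι ι R}
    (hA : ∀ i j, 0 ≤ A i j) (hA1 : A *ᵥ 1 ≤ 1) : Antitone fun k : ℕ => A ^ k *ᵥ (1 : ι → R) := by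
  refine antitone_nat_of_succ_le fun k i => ?_
  rw [pow_succ, ← mulVec_mulVec]
  exact dotProduct_le_dotProduct_of_nonneg_left hA1 (pow_apply_nonneg hA k i)

variable [Semiring R] [LinearOrder R] [IsStrictOrderedRing R] {A W : Matrix ι ι R}

theorem pow_succ_mulVec_one_apply_lt_one (hA : ∀ i j, 0 ≤ A i j) (hAW : ∀ i j, A i j ≤ W i j)
    (hW1 : W *ᵥ 1 ≤ 1) {k : ℕ} {i j : ι} (hij : 0 < (W ^ k) i j) (hj : (A *ᵥ 1) j < 1) :
    (A ^ (k + 1) *ᵥ 1) i < 1 := by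
  have hA1 : A *ᵥ 1 ≤ 1 := mulVec_one_le_one_of_le hAW hW1
  induction k generalizing i with
  | zero =>
    obtain rfl : i = j := by
      by_contra hne
      simp [one_apply_ne hne] at hij
    simpa using hj
  | succ k ih =>
    rw [pow_succ'] at hij
    obtain ⟨l, hil, hlj⟩ := exists_pos_and_pos_of_mul_apply_pos
      (fun i j => (hA i j).trans (hAW i j)) hij
    set r := A ^ (k + 1) *ᵥ (1 : ι → R)
    have hr0 : 0 ≤ r := fun i =>
      dotProduct_nonneg_of_nonneg (pow_apply_nonneg hA (k + 1) i) zero_le_one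
    have hr1 : r ≤ 1 := by
      simpa using antitone_pow_mulVec_one hA hA1 (Nat.zero_le (k + 1))
    calc (A ^ (k + 1 + 1) *ᵥ 1) i = A i ⬝ᵥ r := by rw [pow_succ', ← mulVec_mulVec]; rfl
      _ ≤ W i ⬝ᵥ r := dotProduct_le_dotProduct_of_nonneg_right (hAW i) hr0
      _ < W i ⬝ᵥ 1 :=
        sum_lt_sum
          (fun m _ => mul_le_mul_of_nonneg_left (hr1 m) ((hA i m).trans (hAW i m)))
          ⟨l, mem_univ l, mul_lt_mul_of_pos_left (ih hlj) hil⟩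
      _ ≤ 1 := hW1 i

theorem exists_pow_mulVec_one_lt_one (hA : ∀ i j, 0 ≤ A i j) (hAW : ∀ i j, A i j ≤ W i j)
    (hW1 : W *ᵥ 1 ≤ 1) (hreach : ∀ i, ∃ k j, (A *ᵥ 1) j < 1 ∧ 0 < (W ^ k) i j) :
    ∃ N ≠ 0, ∀ i, (A ^ N *ᵥ 1) i < 1 := by
  have hA1 : A *ᵥ 1 ≤ 1 := mulVec_one_le_one_of_le hAW hW1
  choose k j hj hij using hreach
  refine ⟨univ.sup k + 1, Nat.succ_ne_zero _, fun i => ?_⟩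
  have hk : k i + 1 ≤ univ.sup k + 1 := Nat.succ_le_succ (le_sup (mem_univ i))
  exact (antitone_pow_mulVec_one hA hA1 hk i).trans_lt
    (pow_succ_mulVec_one_apply_lt_one hA hAW hW1 (hij i) (hj i))

end RowSums

section TopologicallyNilpotent

theorem isTopologicallyNilpotent_of_norm_pow_lt_one {R : Type*} [SeminormedRing R] {a : R} {N : ℕ}
    (hN : N ≠ 0) (ha : ‖a ^ N‖ < 1) : IsTopologicallyNilpotent a := by
  have hbdd : IsBoundedUnder (· ≤ ·) atTop (norm ∘ fun t : ℕ => a ^ (t % N)) :=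
    isBoundedUnder_of ⟨∑ r ∈ range N, ‖a ^ r‖, fun t =>
      single_le_sum (f := fun r => ‖a ^ r‖) (fun _ _ => norm_nonneg _)
        (mem_range.2 (Nat.mod_lt t (Nat.pos_of_ne_zero hN)))⟩
  have hlim : Tendsto (fun t : ℕ => (a ^ N) ^ (t / N)) atTop (𝓝 0) :=
    (tendsto_pow_atTop_nhds_zero_of_norm_lt_one ha).comp (Nat.tendsto_div_const_atTop hN)
  refine (isBoundedUnder_le_mul_tendsto_zero hbdd hlim).congr fun t => ?_
  rw [← pow_mul, ← pow_add, Nat.mod_add_div]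

open scoped Matrix.Norms.Operator in
theorem linfty_opNorm_lt_of_mulVec_one_lt {m n : Type*} [Fintype m] [Fintype n] {A : Matrix m n ℝ}
    (hA : ∀ i j, 0 ≤ A i j) {r : ℝ} (hr : 0 < r) (h : ∀ i, (A *ᵥ 1) i < r) : ‖A‖ < r := by
  lift r to NNReal using hr.le
  rw [linfty_opNorm_def, NNReal.coe_lt_coe, Finset.sup_lt_iff (by simpa using hr)]
  intro i _
  simpa [← NNReal.coe_lt_coe, mulVec, dotProduct, abs_of_nonneg (hA i _)] using h i

variable {ι : Type*} [Fintype ι] [DecidableEq ι]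

theorem isTopologicallyNilpotent_of_reaches_deficient_row {A W : Matrix ι ι ℝ}
    (hA : ∀ i j, 0 ≤ A i j) (hAW : ∀ i j, A i j ≤ W i j) (hW1 : W *ᵥ 1 ≤ 1)
    (hreach : ∀ i, ∃ k j, (A *ᵥ 1) j < 1 ∧ 0 < (W ^ k) i j) : IsTopologicallyNilpotent A := by
  obtain ⟨N, hN, hlt⟩ := exists_pow_mulVec_one_lt_one hA hAW hW1 hreach
  open scoped Matrix.Norms.Operator in
  exact isTopologicallyNilpotent_of_norm_pow_lt_one hN
    (linfty_opNorm_lt_of_mulVec_one_lt (pow_apply_nonneg hA N) one_pos hlt)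

variable {K : Type*} [TopologicalSpace K]

theorem tendsto_pow_mulVec_zero [Semiring K] [IsTopologicalSemiring K] {A : Matrix ι ι K}
    (hA : IsTopologicallyNilpotent A) (v : ι → K) :
    Tendsto (fun t : ℕ => A ^ t *ᵥ v) atTop (𝓝 0) := by
  have hcont : Continuous fun B : Matrix ι ι K => B *ᵥ v :=
    continuous_id.matrix_mulVec continuous_const
  simpa only [zero_mulVec, Function.comp_def] using (hcont.tendsto 0).comp hA

variable [Field K] [IsTopologicalRing K] [T2Space K] {A : Matrix ι ι K}

theorem isUnit_one_sub_of_isTopologicallyNilpotent (hA : IsTopologicallyNilpotent A) :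
    IsUnit (1 - A) := by
  rw [← mulVec_injective_iff_isUnit]
  refine (injective_iff_map_eq_zero (1 - A).mulVecLin).2 fun v hv => ?_
  have hfix : A *ᵥ v = v := by
    simpa [sub_mulVec, sub_eq_zero, eq_comm] using hv
  have hpow (t : ℕ) : A ^ t *ᵥ v = v := by
    induction t with
    | zero => simp
    | succ t ih => rw [pow_succ, ← mulVec_mulVec, hfix, ih]
  exact tendsto_nhds_unique tendsto_const_nhds
    ((tendsto_pow_mulVec_zero hA v).congr hpow)

theorem tendsto_of_affine_recurrence (hA : IsTopologicallyNilpotent A) {b : ι → K}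
    {x : ℕ → ι → K} (hx : ∀ t, x (t + 1) = A *ᵥ x t + b) :
    Tendsto x atTop (𝓝 ((1 - A)⁻¹ *ᵥ b)) := by
  set p := (1 - A)⁻¹ *ᵥ b with hp
  have hdet : IsUnit (1 - A).det :=
    (isUnit_iff_isUnit_det _).1 (isUnit_one_sub_of_isTopologicallyNilpotent hA)
  have hpb : p - A *ᵥ p = b := by
    calc p - A *ᵥ p = (1 - A) *ᵥ p := by rw [sub_mulVec, one_mulVec]
      _ = b := by rw [hp, mulVec_mulVec, mul_nonsing_inv _ hdet, one_mulVec]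
  have herr (t : ℕ) : x t = A ^ t *ᵥ (x 0 - p) + p := by
    induction t with
    | zero => simp
    | succ t ih =>
      rw [hx, ih, mulVec_add, mulVec_mulVec, ← pow_succ', ← hpb]
      abel
  simpa only [← herr, zero_add] using (tendsto_pow_mulVec_zero hA (x 0 - p)).add_const p

end TopologicallyNilpotent

section FriedkinJohnsen

variable {ι : Type*} [Fintype ι] [DecidableEq ι]

theorem one_sub_diagonal_mul_apply {R : Type*} [Ring R] (θ : ι → R) (W : Matrix ι ι R) (i j : ι) :
    ((1 - diagonal θ) * W) i j = (1 - θ i) * W i j := by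
  rw [← diagonal_one, diagonal_sub, diagonal_mul]

theorem one_sub_diagonal_mul_mulVec_one_apply_lt_one {W : Matrix ι ι ℝ} {θ : ι → ℝ} {i : ι}
    (hW1 : (W *ᵥ 1) i ≤ 1) (hi : θ i ∈ Set.Ioc (0 : ℝ) 1) : (((1 - diagonal θ) * W) *ᵥ 1) i < 1 :=
  calc (((1 - diagonal θ) * W) *ᵥ 1) i = (1 - θ i) * (W *ᵥ 1) i := by
        simp only [mulVec, dotProduct_one, one_sub_diagonal_mul_apply, mul_sum]
    _ ≤ 1 - θ i := mul_le_of_le_one_right (sub_nonneg.2 hi.2) hW1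
    _ < 1 := sub_lt_self 1 hi.1

theorem fj_dynamics_converges_general {W : Matrix ι ι ℝ} (hW0 : ∀ i j, 0 ≤ W i j)
    (hW1 : ∀ i, ∑ j, W i j ≤ 1) {θ : ι → ℝ} (hθ : ∀ i, θ i ∈ Set.Icc (0 : ℝ) 1)
    (hreach : ∀ i, ∃ k j, 0 < θ j ∧ 0 < (W ^ k) i j) {u : ι → ℝ} {x : ℕ → ι → ℝ}
    (hx : ∀ t, x (t + 1) = ((1 - diagonal θ) * W) *ᵥ x t + diagonal θ *ᵥ u) :
    Tendsto x atTop (𝓝 (((1 - (1 - diagonal θ) * W)⁻¹ * diagonal θ) *ᵥ u)) := by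
  have hW1' : W *ᵥ 1 ≤ 1 := fun i => (dotProduct_one (W i)).trans_le (hW1 i)
  have hA0 (i j : ι) : 0 ≤ ((1 - diagonal θ) * W) i j := by
    rw [one_sub_diagonal_mul_apply]
    exact mul_nonneg (sub_nonneg.2 (hθ i).2) (hW0 i j)
  have hAW (i j : ι) : ((1 - diagonal θ) * W) i j ≤ W i j := by
    rw [one_sub_diagonal_mul_apply]
    exact mul_le_of_le_one_left (hW0 i j) (sub_le_self 1 (hθ i).1)
  rw [← mulVec_mulVec]
  refine tendsto_of_affine_recurrence
    (isTopologicallyNilpotent_of_reaches_deficient_row hA0 hAW hW1' fun i => ?_) hx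
  obtain ⟨k, j, hj, hij⟩ := hreach i
  exact ⟨k, j, one_sub_diagonal_mul_mulVec_one_apply_lt_one (hW1' j) ⟨hj, (hθ j).2⟩, hij⟩

end FriedkinJohnsen

/-- FJ dynamics `x(t+1) = (I-Θ)W x(t) + Θ x₀` converges to `P x₀`
with `P = (I - (I-Θ)W)⁻¹ Θ`. -/
theorem fj_dynamics_converges
    (n : ℕ) (hn : 1 ≤ n) (W : Matrix (Fin n) (Fin n) ℝ)
    (hW0 : ∀ i j, 0 ≤ W i j) (hW1 : ∀ i, ∑ j, W i j = 1)
    (θ : Fin n → ℝ) (hθ : ∀ i, θ i ∈ Set.Icc (0 : ℝ) 1)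
    (hreach : ∀ i, 0 < θ i ∨ ∃ k, 1 ≤ k ∧ ∃ j, 0 < θ j ∧ 0 < (W ^ k) i j)
    (x₀ : Fin n → ℝ) (x : ℕ → Fin n → ℝ) (hx0 : x 0 = x₀)
    (hxrec : ∀ t, x (t + 1) =
      ((1 - Matrix.diagonal θ) * W).mulVec (x t) + (Matrix.diagonal θ).mulVec x₀) :
    Filter.Tendsto x Filter.atTop
      (nhds (((1 - (1 - Matrix.diagonal θ) * W)⁻¹ * Matrix.diagonal θ).mulVec x₀)) := by
  exact fj_dynamics_converges_general hW0 (fun i => (hW1 i).le) hθ (fun i => (hreach i).elim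
    (fun hi => ⟨0, i, hi, by simp⟩) fun ⟨k, _, j, hkj⟩ => ⟨k, j, hkj⟩) hxrec
end

section
/- Assume W is strongly connected, θ_j > 0 for at least one agent j, and ω ∈ (0,1). Then for every subset S ⊆ V and every agent i ∉ S with θ_i < 1, the influencer's social power strictly increases when i is added: sp₀(S ∪ {i}) > sp₀(S). -/
open Matrix Finset

/-- `H(S) = (I - ω Σ_{j∈S} e_j e_jᵀ) (I - Θ) W`. -/
noncomputable def Hmat {n : ℕ} (W : Matrix (Fin n) (Fin n) ℝ) (θ : Fin n → ℝ) (ω : ℝ)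
    (S : Finset (Fin n)) : Matrix (Fin n) (Fin n) ℝ :=
  (1 - Matrix.diagonal (fun i => if i ∈ S then ω else 0)) *
    ((1 - Matrix.diagonal θ) * W)

/-- `p₀(S) = (I - H(S))⁻¹ (I - Θ) ω Σ_{j∈S} e_j`. -/
noncomputable def p0vec {n : ℕ} (W : Matrix (Fin n) (Fin n) ℝ) (θ : Fin n → ℝ) (ω : ℝ)
    (S : Finset (Fin n)) : Fin n → ℝ :=
  ((1 - Hmat W θ ω S)⁻¹ * (1 - Matrix.diagonal θ)).mulVec
    (fun j => if j ∈ S then ω else 0)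

/-- The influencer's social power `sp₀(S) = (𝟙ᵀ p₀(S) + 1)/(n+1)`. -/
noncomputable def sp0 {n : ℕ} (W : Matrix (Fin n) (Fin n) ℝ) (θ : Fin n → ℝ) (ω : ℝ)
    (S : Finset (Fin n)) : ℝ :=
  ((∑ i, p0vec W θ ω S i) + 1) / (n + 1)

/-!
Put `A = (I - Θ) W` and let `a` be the vector of link weights, so that `p = p₀(S)` solves
`p = (I - diag a) A p + diag a (𝟙 - θ)`. Along the edges of `W` every agent reaches a stubborn one,
and then `(I - diag a) A` satisfies a minimum principle: `(I - diag a) A x ≤ x` forces `0 ≤ x`.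
Applied to `𝟙 - p`, it gives `p < 𝟙`, hence `A p ≤ 𝟙 - θ`, strictly at agents that are not fully
stubborn. If `q` is the solution for link weights `b ≥ a`, then
`q - p = (I - diag b) A (q - p) + diag (b - a) (𝟙 - θ - A p)`, and the minimum principle shows
that `p ≤ q`, strictly wherever the last term is positive.
-/

section Substochastic

variable {ι K : Type*} [Fintype ι] [CommRing K] [LinearOrder K]
  {A : Matrix ι ι K} {x : ι → K}

/-- There is a (possibly empty) path from one index to another in the directed graph whose edges
are the positive entries of `A`. -/
def Reaches (A : Matrix ι ι K) : ι → ι → Prop :=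
  Relation.ReflTransGen fun k l => 0 < A k l

/-- `A` is nonnegative with row sums at most one, and every index reaches a row with sum less than
one. Then `1 - A` is what is called weakly chained diagonally dominant. -/
structure IsWeaklyChainedSubstochastic (A : Matrix ι ι K) : Prop where
  nonneg : ∀ k l, 0 ≤ A k l
  sum_row_le_one : ∀ k, ∑ l, A k l ≤ 1
  exists_reaches_sum_row_lt_one : ∀ k, ∃ j, ∑ l, A j l < 1 ∧ Reaches A k j

lemma reaches_of_pow_apply_ne_zero [DecidableEq ι] (hA : ∀ k l, 0 ≤ A k l) {t : ℕ} {k j : ι}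
    (hkj : (A ^ t) k j ≠ 0) : Reaches A k j := by
  induction t generalizing k with
  | zero =>
    obtain rfl : k = j := by
      by_contra hne
      exact hkj (by rw [pow_zero, one_apply_ne hne])
    exact .refl
  | succ t ih =>
    rw [pow_succ', mul_apply] at hkj
    obtain ⟨m, -, hm⟩ := exists_ne_zero_of_sum_ne_zero hkj
    have hkm : 0 < A k m := (hA k m).lt_of_ne' (left_ne_zero_of_mul hm)
    exact .head hkm (ih (right_ne_zero_of_mul hm))

variable [IsStrictOrderedRing K]

lemma mulVec_apply_nonneg {k : ι} (hA : ∀ l, 0 ≤ A k l) (hx : ∀ l, 0 ≤ x l) :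
    0 ≤ (A *ᵥ x) k :=
  sum_nonneg fun l _ => mul_nonneg (hA l) (hx l)

lemma mulVec_apply_lt_one {k : ι} (hA : ∀ l, 0 ≤ A k l) (hA_sum : ∑ l, A k l ≤ 1)
    (hx : ∀ l, x l < 1) : (A *ᵥ x) k < 1 := by
  have hterm_le (l : ι) : A k l * x l ≤ A k l := mul_le_of_le_one_right (hA l) (hx l).le
  by_cases hrow : ∃ l, 0 < A k l
  · obtain ⟨l, hl⟩ := hrow
    calc (A *ᵥ x) k < ∑ l, A k l :=
          sum_lt_sum (fun l _ => hterm_le l) ⟨l, mem_univ l, mul_lt_of_lt_one_right hl (hx l)⟩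
      _ ≤ 1 := hA_sum
  · have hzero (l : ι) : A k l = 0 := (hA l).antisymm' (not_lt.1 fun hl => hrow ⟨l, hl⟩)
    simp [mulVec, dotProduct, hzero]

lemma pos_of_reaches (hA : ∀ k l, 0 ≤ A k l) (hx : ∀ k, 0 ≤ x k)
    (hstep : ∀ k, 0 < (A *ᵥ x) k → 0 < x k) {k j : ι} (hkj : Reaches A k j) (hj : 0 < x j) :
    0 < x k := by
  induction hkj using Relation.ReflTransGen.head_induction_on with
  | refl => exact hj
  | @head k m hkm _ hm =>
    exact hstep k <| sum_pos' (fun l _ => mul_nonneg (hA k l) (hx l))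
      ⟨m, mem_univ m, mul_pos hkm hm⟩

namespace IsWeaklyChainedSubstochastic

/- If `x` had a negative minimum `x m`, then `z = x - x m` would be nonnegative with `A z ≤ z`,
strictly in the rows with sum less than one, hence positive everywhere; but `z m = 0`. -/
lemma nonneg_of_mulVec_le (hA : IsWeaklyChainedSubstochastic A) (hx : ∀ k, (A *ᵥ x) k ≤ x k) :
    ∀ k, 0 ≤ x k := by
  by_contra! ⟨k₀, hk₀⟩
  obtain ⟨m, -, hm⟩ := exists_min_image univ x ⟨k₀, mem_univ k₀⟩
  have hm_neg : x m < 0 := (hm k₀ (mem_univ k₀)).trans_lt hk₀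
  let z : ι → K := fun k => x k - x m
  have hz (k : ι) : 0 ≤ z k := sub_nonneg.2 (hm k (mem_univ k))
  have hAz (k : ι) : (A *ᵥ z) k = (A *ᵥ x) k - (∑ l, A k l) * x m := by
    simp only [z, mulVec, dotProduct, mul_sub, sum_sub_distrib, sum_mul]
  have hAz_le (k : ι) : (A *ᵥ z) k + (1 - ∑ l, A k l) * -x m ≤ z k := by
    rw [hAz]
    linarith [hx k]
  have hstep (k : ι) (hk : 0 < (A *ᵥ z) k) : 0 < z k := by
    have h_slack := mul_nonneg (sub_nonneg.2 (hA.sum_row_le_one k)) (neg_pos.2 hm_neg).le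
    linarith [hAz_le k]
  obtain ⟨j, hj, hmj⟩ := hA.exists_reaches_sum_row_lt_one m
  have hzj : 0 < z j := by
    have h_slack := mul_pos (sub_pos.2 hj) (neg_pos.2 hm_neg)
    linarith [hAz_le j, mulVec_apply_nonneg (hA.nonneg j) hz]
  exact (pos_of_reaches hA.nonneg hz hstep hmj hzj).ne' (sub_self _)

lemma isUnit_one_sub {K : Type*} [Field K] [LinearOrder K] [IsStrictOrderedRing K]
    [DecidableEq ι] {A : Matrix ι ι K} (hA : IsWeaklyChainedSubstochastic A) : IsUnit (1 - A) := by
  refine mulVec_injective_iff_isUnit.1 fun x y hxy => ?_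
  have hfix : A *ᵥ (x - y) = x - y := by
    have hker : (1 - A) *ᵥ (x - y) = 0 := by rw [mulVec_sub, sub_eq_zero.2 hxy]
    rw [sub_mulVec, one_mulVec] at hker
    exact (sub_eq_zero.1 hker).symm
  have hle : ∀ k, 0 ≤ (x - y) k := hA.nonneg_of_mulVec_le fun k => (congrFun hfix k).le
  have hge : ∀ k, 0 ≤ (-(x - y)) k :=
    hA.nonneg_of_mulVec_le fun k => by rw [mulVec_neg, hfix]
  funext k
  exact sub_eq_zero.1 ((neg_nonneg.1 (hge k)).antisymm (hle k))

end IsWeaklyChainedSubstochastic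

end Substochastic

section Damping

variable {ι K : Type*} [Fintype ι] [CommRing K]

lemma one_sub_diagonal_mul_apply_s2 [DecidableEq ι] (a : ι → K) (A : Matrix ι ι K) (k l : ι) :
    ((1 - diagonal a) * A) k l = (1 - a k) * A k l := by
  rw [sub_mul, one_mul, Matrix.sub_apply, diagonal_mul, sub_mul, one_mul]

lemma one_sub_diagonal_mulVec_apply [DecidableEq ι] (a x : ι → K) (k : ι) :
    ((1 - diagonal a) *ᵥ x) k = (1 - a k) * x k := by
  rw [sub_mulVec, one_mulVec, Pi.sub_apply, mulVec_diagonal, sub_mul, one_mul]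

lemma one_sub_diagonal_mul_mulVec_apply [DecidableEq ι] (a : ι → K) (A : Matrix ι ι K)
    (x : ι → K) (k : ι) : (((1 - diagonal a) * A) *ᵥ x) k = (1 - a k) * (A *ᵥ x) k := by
  rw [← mulVec_mulVec, one_sub_diagonal_mulVec_apply]

/-- `p` is an equilibrium of the opinion dynamics in which agent `k` puts weight `a k` on an
external source that shows it the opinion `c k`, and weight `1 - a k` on the update `A p`. -/
def IsDampedEquilibrium (A : Matrix ι ι K) (c a p : ι → K) : Prop :=
  ∀ k, p k = (1 - a k) * (A *ᵥ p) k + a k * c k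

variable [LinearOrder K] [IsStrictOrderedRing K] {A : Matrix ι ι K} {a b c p q : ι → K}

lemma exists_reaches_one_sub_diagonal_mul [DecidableEq ι] (ha : ∀ k, a k ≤ 1) {k j : ι}
    (hkj : Reaches A k j) (hj : ∑ l, ((1 - diagonal a) * A) j l < 1) :
    ∃ j, ∑ l, ((1 - diagonal a) * A) j l < 1 ∧ Reaches ((1 - diagonal a) * A) k j := by
  induction hkj using Relation.ReflTransGen.head_induction_on with
  | refl => exact ⟨j, hj, .refl⟩
  | @head k m hkm _ ih =>
    rcases (ha k).eq_or_lt with hak | hak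
    · refine ⟨k, ?_, .refl⟩
      simp [one_sub_diagonal_mul_apply_s2, hak]
    · obtain ⟨j', hj', hmj'⟩ := ih
      refine ⟨j', hj', .head ?_ hmj'⟩
      rw [one_sub_diagonal_mul_apply_s2]
      exact mul_pos (sub_pos.2 hak) hkm

lemma isWeaklyChainedSubstochastic_one_sub_diagonal_mul [DecidableEq ι]
    (hA : ∀ k l, 0 ≤ A k l) (hA_sum : ∀ k, ∑ l, A k l ≤ 1) (ha : ∀ k, a k ∈ Set.Icc 0 1)
    (hreach : ∀ k, ∃ j, (0 < a j ∨ ∑ l, A j l < 1) ∧ Reaches A k j) :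
    IsWeaklyChainedSubstochastic ((1 - diagonal a) * A) where
  nonneg k l := by
    rw [one_sub_diagonal_mul_apply_s2]
    exact mul_nonneg (sub_nonneg.2 (ha k).2) (hA k l)
  sum_row_le_one k := by
    simp only [one_sub_diagonal_mul_apply_s2, ← mul_sum]
    exact mul_le_one₀ (sub_le_self _ (ha k).1) (sum_nonneg fun l _ => hA k l) (hA_sum k)
  exists_reaches_sum_row_lt_one k := by
    obtain ⟨j, hj, hkj⟩ := hreach k
    refine exists_reaches_one_sub_diagonal_mul (fun k => (ha k).2) hkj ?_
    simp only [one_sub_diagonal_mul_apply_s2, ← mul_sum]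
    have h_nonneg : 0 ≤ ∑ l, A j l := sum_nonneg fun l _ => hA j l
    rcases hj with hj | hj
    · exact (mul_le_of_le_one_right (sub_nonneg.2 (ha j).2) (hA_sum j)).trans_lt
        (sub_lt_self _ hj)
    · exact (mul_le_of_le_one_left h_nonneg (sub_le_self _ (ha j).1)).trans_lt hj

namespace IsWeaklyChainedSubstochastic

lemma one_sub_diagonal_mul [DecidableEq ι] (hA : IsWeaklyChainedSubstochastic A)
    (ha : ∀ k, a k ∈ Set.Icc 0 1) : IsWeaklyChainedSubstochastic ((1 - diagonal a) * A) :=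
  isWeaklyChainedSubstochastic_one_sub_diagonal_mul hA.nonneg hA.sum_row_le_one ha fun k =>
    (hA.exists_reaches_sum_row_lt_one k).imp fun _ => And.imp_left .inr

lemma nonneg_of_damped_mulVec_le (hA : IsWeaklyChainedSubstochastic A)
    (ha : ∀ k, a k ∈ Set.Icc 0 1) {x : ι → K} (hx : ∀ k, (1 - a k) * (A *ᵥ x) k ≤ x k) :
    ∀ k, 0 ≤ x k := by
  classical
  refine (hA.one_sub_diagonal_mul ha).nonneg_of_mulVec_le fun k => ?_
  rw [one_sub_diagonal_mul_mulVec_apply]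
  exact hx k

end IsWeaklyChainedSubstochastic

namespace IsDampedEquilibrium

lemma lt_one (hA : IsWeaklyChainedSubstochastic A) (ha : ∀ k, a k ∈ Set.Ico 0 1)
    (hc : ∀ k, c k ≤ 1) (hp : IsDampedEquilibrium A c a p) (k : ι) : p k < 1 := by
  let y : ι → K := fun k => 1 - p k
  have hAy (k : ι) : (A *ᵥ y) k = ∑ l, A k l - (A *ᵥ p) k := by
    simp only [y, mulVec, dotProduct, mul_sub, mul_one, sum_sub_distrib]
  have hy_ge (k : ι) : (1 - a k) * (A *ᵥ y) k + (1 - a k) * (1 - ∑ l, A k l) ≤ y k := by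
    have h_source : a k * c k ≤ a k := mul_le_of_le_one_right (ha k).1 (hc k)
    rw [hAy]
    linarith [hp k]
  have ha_pos (k : ι) : 0 < 1 - a k := sub_pos.2 (ha k).2
  have hy_ge_damped (k : ι) : (1 - a k) * (A *ᵥ y) k ≤ y k := by
    have h_slack := mul_nonneg (ha_pos k).le (sub_nonneg.2 (hA.sum_row_le_one k))
    linarith [hy_ge k]
  have hy : ∀ k, 0 ≤ y k :=
    hA.nonneg_of_damped_mulVec_le (fun k => Set.Ico_subset_Icc_self (ha k)) hy_ge_damped
  obtain ⟨j, hj, hkj⟩ := hA.exists_reaches_sum_row_lt_one k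
  have hyj : 0 < y j := by
    have h_slack := mul_pos (ha_pos j) (sub_pos.2 hj)
    have h_inherited := mul_nonneg (ha_pos j).le (mulVec_apply_nonneg (hA.nonneg j) hy)
    linarith [hy_ge j]
  have hstep (k : ι) (hk : 0 < (A *ᵥ y) k) : 0 < y k :=
    (mul_pos (ha_pos k) hk).trans_le (hy_ge_damped k)
  exact sub_pos.1 (pos_of_reaches hA.nonneg hy hstep hkj hyj)

lemma sub_eq (hp : IsDampedEquilibrium A c a p) (hq : IsDampedEquilibrium A c b q) (k : ι) :
    (q - p) k = (1 - b k) * (A *ᵥ (q - p)) k + (b k - a k) * (c k - (A *ᵥ p) k) := by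
  rw [mulVec_sub, Pi.sub_apply, Pi.sub_apply]
  linear_combination hq k - hp k

lemma le_of_le (hA : IsWeaklyChainedSubstochastic A) (hb : ∀ k, b k ∈ Set.Icc 0 1)
    (hp : IsDampedEquilibrium A c a p) (hq : IsDampedEquilibrium A c b q)
    (hab : ∀ k, a k ≤ b k) (hAp : ∀ k, (A *ᵥ p) k ≤ c k) (k : ι) : p k ≤ q k := by
  refine sub_nonneg.1 (hA.nonneg_of_damped_mulVec_le hb (x := q - p) (fun k => ?_) k)
  have h_gain := mul_nonneg (sub_nonneg.2 (hab k)) (sub_nonneg.2 (hAp k))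
  linarith [hp.sub_eq hq k]

lemma lt_of_lt (hA : IsWeaklyChainedSubstochastic A) (hb : ∀ k, b k ∈ Set.Icc 0 1)
    (hp : IsDampedEquilibrium A c a p) (hq : IsDampedEquilibrium A c b q)
    (hab : ∀ k, a k ≤ b k) (hAp : ∀ k, (A *ᵥ p) k ≤ c k) {i : ι} (habi : a i < b i)
    (hApi : (A *ᵥ p) i < c i) : p i < q i := by
  have hd : ∀ k, 0 ≤ (q - p) k := fun k => sub_nonneg.2 (le_of_le hA hb hp hq hab hAp k)
  have h_gain : 0 < (b i - a i) * (c i - (A *ᵥ p) i) :=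
    mul_pos (sub_pos.2 habi) (sub_pos.2 hApi)
  have h_inherited : 0 ≤ (1 - b i) * (A *ᵥ (q - p)) i :=
    mul_nonneg (sub_nonneg.2 (hb i).2) (mulVec_apply_nonneg (hA.nonneg i) hd)
  refine sub_pos.1 ?_
  rw [← Pi.sub_apply, hp.sub_eq hq i]
  exact add_pos_of_nonneg_of_pos h_inherited h_gain

end IsDampedEquilibrium

end Damping

section SocialPower

variable {n : ℕ} {W : Matrix (Fin n) (Fin n) ℝ} {θ : Fin n → ℝ} {ω : ℝ}

/-- The vector `ω Σ_{j∈S} e_j` of the weights that the agents put on the influencer. -/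
def linkWeight (ω : ℝ) (S : Finset (Fin n)) : Fin n → ℝ :=
  fun k => if k ∈ S then ω else 0

lemma linkWeight_apply_mem {s : Set ℝ} (h_zero : 0 ∈ s) (hω : ω ∈ s) (S : Finset (Fin n))
    (k : Fin n) : linkWeight ω S k ∈ s := by
  unfold linkWeight
  split_ifs
  exacts [hω, h_zero]

lemma linkWeight_mono (hω : 0 ≤ ω) : Monotone (linkWeight (n := n) ω) := by
  intro S T hST k
  unfold linkWeight
  split_ifs with hS hT
  exacts [le_rfl, absurd (hST hS) hT, hω, le_rfl]

lemma linkWeight_lt_insert (hω : 0 < ω) {S : Finset (Fin n)} {i : Fin n} (hi : i ∉ S) :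
    linkWeight ω S i < linkWeight ω (insert i S) i := by
  simpa [linkWeight, hi] using hω

lemma isDampedEquilibrium_p0vec (hA : IsWeaklyChainedSubstochastic ((1 - diagonal θ) * W))
    (hω : ω ∈ Set.Icc 0 1) (S : Finset (Fin n)) :
    IsDampedEquilibrium ((1 - diagonal θ) * W) (1 - θ) (linkWeight ω S) (p0vec W θ ω S) := by
  have hH : Hmat W θ ω S = (1 - diagonal (linkWeight ω S)) * ((1 - diagonal θ) * W) := rfl
  have hunit : IsUnit (1 - Hmat W θ ω S).det := by
    rw [← isUnit_iff_isUnit_det, hH]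
    exact (hA.one_sub_diagonal_mul
      (linkWeight_apply_mem (Set.left_mem_Icc.2 zero_le_one) hω S)).isUnit_one_sub
  have hsystem : (1 - Hmat W θ ω S) *ᵥ p0vec W θ ω S = (1 - diagonal θ) *ᵥ linkWeight ω S := by
    rw [p0vec, mulVec_mulVec, mul_nonsing_inv_cancel_left _ _ hunit]
    rfl
  intro k
  have hk := congrFun hsystem k
  rw [sub_mulVec, one_mulVec, Pi.sub_apply, hH, one_sub_diagonal_mul_mulVec_apply,
    one_sub_diagonal_mulVec_apply] at hk
  rw [Pi.sub_apply, Pi.one_apply]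
  linear_combination hk

theorem sp0_strict_monotone_general (hW0 : ∀ k l, 0 ≤ W k l) (hW1 : ∀ k, ∑ l, W k l ≤ 1)
    (hθ : ∀ k, θ k ∈ Set.Icc 0 1)
    (hreach : ∀ k, ∃ j, (0 < θ j ∨ ∑ l, W j l < 1) ∧ ∃ t, 0 < (W ^ t) k j)
    (hω : ω ∈ Set.Ioo 0 1) {S : Finset (Fin n)} {i : Fin n} (hiS : i ∉ S) (hθi : θ i < 1) :
    sp0 W θ ω S < sp0 W θ ω (insert i S) := by
  have hA : IsWeaklyChainedSubstochastic ((1 - diagonal θ) * W) :=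
    isWeaklyChainedSubstochastic_one_sub_diagonal_mul hW0 hW1 hθ fun k =>
      let ⟨j, hj, _, hkj⟩ := hreach k
      ⟨j, hj, reaches_of_pow_apply_ne_zero hW0 hkj.ne'⟩
  have hω' : ω ∈ Set.Icc 0 1 := Set.Ioo_subset_Icc_self hω
  have hp := isDampedEquilibrium_p0vec hA hω' S
  have hq := isDampedEquilibrium_p0vec hA hω' (insert i S)
  have hp_lt : ∀ k, p0vec W θ ω S k < 1 :=
    hp.lt_one hA (linkWeight_apply_mem (by simp) (Set.Ioo_subset_Ico_self hω) S)
      fun k => sub_le_self _ (hθ k).1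
  have hWp (k : Fin n) : (W *ᵥ p0vec W θ ω S) k < 1 := mulVec_apply_lt_one (hW0 k) (hW1 k) hp_lt
  have hAp (k : Fin n) : (((1 - diagonal θ) * W) *ᵥ p0vec W θ ω S) k ≤ (1 - θ) k :=
    (one_sub_diagonal_mul_mulVec_apply ..).trans_le
      (mul_le_of_le_one_right (sub_nonneg.2 (hθ k).2) (hWp k).le)
  have hApi : (((1 - diagonal θ) * W) *ᵥ p0vec W θ ω S) i < (1 - θ) i :=
    (one_sub_diagonal_mul_mulVec_apply ..).trans_lt
      (mul_lt_of_lt_one_right (sub_pos.2 hθi) (hWp i))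
  have hb := linkWeight_apply_mem (by simp) hω' (insert i S)
  have hab := linkWeight_mono hω.1.le (subset_insert i S)
  have hsum : ∑ k, p0vec W θ ω S k < ∑ k, p0vec W θ ω (insert i S) k :=
    sum_lt_sum (fun k _ => hp.le_of_le hA hb hq hab hAp k)
      ⟨i, mem_univ i, hp.lt_of_lt hA hb hq hab hAp (linkWeight_lt_insert hω.1 hiS) hApi⟩
  unfold sp0
  gcongr

end SocialPower

/-- Adding a link strictly increases the influencer's social power. -/
theorem sp0_strict_monotone
    (n : ℕ) (hn : 1 ≤ n) (W : Matrix (Fin n) (Fin n) ℝ)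
    (hW0 : ∀ i j, 0 ≤ W i j) (hW1 : ∀ i, ∑ j, W i j = 1)
    (hconn : ∀ i j : Fin n, ∃ k, 1 ≤ k ∧ 0 < (W ^ k) i j)
    (θ : Fin n → ℝ) (hθ : ∀ i, θ i ∈ Set.Icc (0 : ℝ) 1) (hθpos : ∃ j, 0 < θ j)
    (ω : ℝ) (hω : ω ∈ Set.Ioo (0 : ℝ) 1)
    (S : Finset (Fin n)) (i : Fin n) (hiS : i ∉ S) (hθi : θ i < 1) :
    sp0 W θ ω S < sp0 W θ ω (insert i S) := by
  obtain ⟨j, hj⟩ := hθpos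
  exact sp0_strict_monotone_general hW0 (fun k => (hW1 k).le) hθ
    (fun k => ⟨j, .inl hj, (hconn k j).imp fun _ => And.right⟩) hω hiS hθi
end

section
/- Assume homogeneous stubbornness: θ_i = θ for all i ∈ V with θ ∈ (0,1), and let ω ∈ [0,1). Then I − H(S) is invertible for every S ⊆ V, and the influencer's social power admits the representation sp₀(S) = (n + 1 − n θ f(S; θ, ω)) / (n + 1), where f(S; θ, ω) = (1/n) 𝟙ᵀ ( I − (1 − θ)(I − ω Σ_{j∈S} e_j e_jᵀ) W )^{-1} 𝟙. (Consequently, maximizing sp₀ over S is equivalent to minimizing f(S; θ, ω).) -/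
open Matrix Finset

/-!
Since `W 𝟙 = 𝟙`, row `i` of `H = diag(c) W` with `c i = (1 - ω 1_{i ∈ S}) (1 - θ i)` sums to `c i`,
so `(I - H) 𝟙 = 𝟙 - c`. The right-hand side splits as `θ` plus the vector `(I - Θ) ω Σ_{j∈S} e_j`
that defines `p₀`; applying `(I - H)⁻¹` gives `𝟙 = (I - H)⁻¹ θ + p₀`. The inverse exists because
`|c i| < 1` makes `I - H` strictly diagonally dominant.
-/

section Matrix

variable {ι : Type*} [Fintype ι]

theorem sum_mulVec_const {κ R : Type*} [Fintype κ] [CommSemiring R] (A : Matrix κ ι R) (a : R) :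
    ∑ i, (A *ᵥ fun _ => a) i = a * ∑ i, (A *ᵥ fun _ => 1) i := by
  simp only [mulVec, dotProduct, mul_one, ← sum_mul, mul_comm a]

variable [DecidableEq ι]

theorem isUnit_one_sub_of_sum_norm_row_lt_one {K : Type*} [NormedField K] {M : Matrix ι ι K}
    (hM : ∀ i, ∑ j, ‖M i j‖ < 1) : IsUnit (1 - M) := by
  refine (isUnit_iff_isUnit_det _).mpr (det_ne_zero_of_sum_row_lt_diag fun i => ?_).isUnit
  calc ∑ j ∈ univ.erase i, ‖(1 - M) i j‖ = ∑ j ∈ univ.erase i, ‖M i j‖ :=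
        sum_congr rfl fun j hj => by
          rw [Matrix.sub_apply, one_apply_ne (ne_of_mem_erase hj).symm, zero_sub, norm_neg]
    _ < 1 - ‖M i i‖ := by
        linarith [hM i, add_sum_erase univ (fun j => ‖M i j‖) (mem_univ i)]
    _ ≤ ‖(1 - M) i i‖ := by
        simpa only [Matrix.sub_apply, one_apply_eq, norm_one] using norm_sub_norm_le 1 (M i i)

theorem isUnit_one_sub_diagonal_mul_of_mem_rowStochastic {W : Matrix ι ι ℝ}
    (hW : W ∈ rowStochastic ℝ ι) {c : ι → ℝ} (hc : ∀ i, |c i| < 1) :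
    IsUnit (1 - diagonal c * W) := by
  refine isUnit_one_sub_of_sum_norm_row_lt_one fun i => ?_
  calc ∑ j, ‖(diagonal c * W) i j‖ = ∑ j, |c i| * W i j := by
        simp only [diagonal_mul, Real.norm_eq_abs, abs_mul,
          abs_of_nonneg (nonneg_of_mem_rowStochastic hW)]
    _ = |c i| := by rw [← mul_sum, sum_row_of_mem_rowStochastic hW, mul_one]
    _ < 1 := hc i

theorem one_sub_diagonal_mul_mulVec_one {R : Type*} [Ring R] {W : Matrix ι ι R}
    (hW : W *ᵥ 1 = 1) (c : ι → R) : (1 - diagonal c * W) *ᵥ 1 = 1 - c := by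
  rw [sub_mulVec, one_mulVec, ← mulVec_mulVec, hW]
  ext i
  simp [mulVec_diagonal]

theorem inv_one_sub_diagonal_mul_mulVec_one_sub {R : Type*} [CommRing R] {W : Matrix ι ι R}
    (hW : W *ᵥ 1 = 1) {c : ι → R} (hunit : IsUnit (1 - diagonal c * W)) :
    (1 - diagonal c * W)⁻¹ *ᵥ (1 - c) = 1 := by
  rw [← one_sub_diagonal_mul_mulVec_one hW, mulVec_mulVec,
    nonsing_inv_mul _ ((isUnit_iff_isUnit_det _).mp hunit), one_mulVec]

end Matrix

section SocialPower

variable {n : ℕ} {W : Matrix (Fin n) (Fin n) ℝ} {θ : Fin n → ℝ} {ω : ℝ} {S : Finset (Fin n)}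

/-- The total weight that each agent places on its neighbours in `W`, once its stubbornness `θ` and
its link to the influencer, of weight `ω` for the agents of `S`, are accounted for. These are the
row sums of `Hmat W θ ω S` when `W` is row-stochastic. -/
def neighborWeight (θ : Fin n → ℝ) (ω : ℝ) (S : Finset (Fin n)) : Fin n → ℝ :=
  fun i => (1 - if i ∈ S then ω else 0) * (1 - θ i)

theorem abs_neighborWeight_lt_one (hθ : ∀ i, θ i ∈ Set.Ioc 0 1) (hω : ω ∈ Set.Icc 0 1) (i : Fin n) :
    |neighborWeight θ ω S i| < 1 := by
  have hlink : |1 - if i ∈ S then ω else 0| ≤ 1 := by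
    split_ifs
    · exact abs_le.mpr ⟨by linarith [hω.2], by linarith [hω.1]⟩
    · simp
  have hopen : |1 - θ i| < 1 := abs_lt.mpr ⟨by linarith [(hθ i).2], by linarith [(hθ i).1]⟩
  rw [neighborWeight, abs_mul]
  exact mul_lt_one_of_nonneg_of_lt_one_right hlink (abs_nonneg _) hopen

theorem Hmat_eq_diagonal_neighborWeight_mul :
    Hmat W θ ω S = diagonal (neighborWeight θ ω S) * W := by
  rw [Hmat, ← mul_assoc, ← diagonal_one, diagonal_sub, diagonal_sub, diagonal_mul_diagonal]
  rfl

theorem Hmat_const (θ : ℝ) :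
    Hmat W (fun _ => θ) ω S =
      (1 - θ) • ((1 - diagonal (fun i => if i ∈ S then ω else 0)) * W) := by
  rw [Hmat, ← smul_one_eq_diagonal θ, sub_mul _ _ W, one_mul, smul_one_mul, mul_sub,
    Matrix.mul_smul, sub_smul, one_smul]

theorem one_sub_diagonal_mulVec_ite_mem :
    (1 - diagonal θ) *ᵥ (fun i => if i ∈ S then ω else 0) = 1 - neighborWeight θ ω S - θ := by
  ext i
  simp only [sub_mulVec, one_mulVec, mulVec_diagonal, neighborWeight, Pi.sub_apply, Pi.one_apply]
  ring

theorem p0vec_eq_one_sub (hW : W *ᵥ 1 = 1) (hunit : IsUnit (1 - Hmat W θ ω S)) :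
    p0vec W θ ω S = 1 - (1 - Hmat W θ ω S)⁻¹ *ᵥ θ := by
  rw [p0vec, ← mulVec_mulVec, one_sub_diagonal_mulVec_ite_mem, mulVec_sub]
  rw [Hmat_eq_diagonal_neighborWeight_mul] at hunit ⊢
  rw [inv_one_sub_diagonal_mul_mulVec_one_sub hW hunit]

theorem sp0_eq_of_isUnit (hW : W *ᵥ 1 = 1) (hunit : IsUnit (1 - Hmat W θ ω S)) :
    sp0 W θ ω S = (n + 1 - ∑ i, ((1 - Hmat W θ ω S)⁻¹ *ᵥ θ) i) / (n + 1) := by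
  have hsum : ∑ i, p0vec W θ ω S i = n - ∑ i, ((1 - Hmat W θ ω S)⁻¹ *ᵥ θ) i := by
    simp [p0vec_eq_one_sub hW hunit]
  rw [sp0, hsum, sub_add_eq_add_sub]

theorem sp0_eq_hitting_time_functional_general (hW : W ∈ rowStochastic ℝ (Fin n))
    (hweight : ∀ i, |neighborWeight θ ω S i| < 1) :
    IsUnit (1 - Hmat W θ ω S) ∧
    sp0 W θ ω S = (n + 1 - ∑ i, ((1 - Hmat W θ ω S)⁻¹ *ᵥ θ) i) / (n + 1) := by
  have hunit : IsUnit (1 - Hmat W θ ω S) := by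
    rw [Hmat_eq_diagonal_neighborWeight_mul]
    exact isUnit_one_sub_diagonal_mul_of_mem_rowStochastic hW hweight
  exact ⟨hunit, sp0_eq_of_isUnit (mem_rowStochastic.mp hW).2 hunit⟩

end SocialPower

/-- Under homogeneous stubbornness, `sp₀(S) = (n + 1 - nθ f(S;θ,ω))/(n+1)`. -/
theorem sp0_eq_hitting_time_functional
    (n : ℕ) (hn : 1 ≤ n) (W : Matrix (Fin n) (Fin n) ℝ)
    (hW0 : ∀ i j, 0 ≤ W i j) (hW1 : ∀ i, ∑ j, W i j = 1)
    (θ : ℝ) (hθ : θ ∈ Set.Ioo (0 : ℝ) 1) (ω : ℝ) (hω : ω ∈ Set.Ico (0 : ℝ) 1)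
    (S : Finset (Fin n)) :
    IsUnit (1 - Hmat W (fun _ => θ) ω S) ∧
    sp0 W (fun _ => θ) ω S =
      ((n : ℝ) + 1 - n * θ * ((1 / n) * ∑ i,
        ((1 - (1 - θ) •
            ((1 - Matrix.diagonal (fun i => if i ∈ S then ω else 0)) * W))⁻¹).mulVec
          (fun _ => (1 : ℝ)) i)) / (n + 1) := by
  have hn0 : (n : ℝ) ≠ 0 := by positivity
  obtain ⟨hunit, hsp0⟩ := sp0_eq_hitting_time_functional_general (S := S)
    (mem_rowStochastic_iff_sum.mpr ⟨hW0, hW1⟩)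
    (abs_neighborWeight_lt_one (fun _ => Set.Ioo_subset_Ioc_self hθ) (Set.Ico_subset_Icc_self hω))
  refine ⟨hunit, ?_⟩
  rw [hsp0, sum_mulVec_const _ θ, Hmat_const]
  field_simp
end

section
/- Assume W is strongly connected, ω ∈ (0,1), and homogeneous stubbornness θ_i = θ for all i ∈ V. For each i ∈ V define g_i = (1 − ω) W_{ii} + Σ_{j ≠ i} W_{ji}. Suppose there is a unique agent i* with g_{i*} = max_{i∈V} g_i, set δ_g = min{ g_{i*} − g_i : i ∈ V, i ≠ i* }, and assume n/(δ_g + n) < θ < 1. Then {i*} is the unique optimal singleton: sp₀({i*}) > sp₀({i}) for every i ∈ V with i ≠ i*. -/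
open Matrix Finset

/-!
With `N = (1 - H({i}))⁻¹` and homogeneous stubbornness `θ`, the total influence `𝟙ᵀ p₀({i})` is
`(1 - θ) ω` times the `i`-th column sum of `N`. Expanding the resolvent to second order,
`N = 1 + H + H² N`, this column sum is `1 + (1 - θ) gᵢ` plus a remainder. The rows of the
nonnegative matrix `H` sum to at most `1 - θ`, so a maximum principle bounds the entries of `N`
between `0` and `1 / θ`, and the remainder between `0` and `n (1 - θ)² / θ`. The lower bound on `θ`
says exactly that this is less than the gap `(1 - θ) δ` between the first-order terms.
-/

section Resolvent

variable {ι R : Type*} [Fintype ι] [DecidableEq ι] [CommRing R] {A : Matrix ι ι R}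

theorem inv_one_sub_eq_one_add_mul (hA : IsUnit (1 - A)) : (1 - A)⁻¹ = 1 + A * (1 - A)⁻¹ := by
  rw [← sub_eq_iff_eq_add, ← one_sub_mul, mul_nonsing_inv _ ((isUnit_iff_isUnit_det _).1 hA)]

theorem inv_one_sub_eq_one_add_add_mul (hA : IsUnit (1 - A)) :
    (1 - A)⁻¹ = 1 + A + A * (A * (1 - A)⁻¹) := by
  have hN := inv_one_sub_eq_one_add_mul hA
  calc (1 - A)⁻¹ = 1 + A * (1 + A * (1 - A)⁻¹) := by rw [← hN, ← hN]
    _ = 1 + A + A * (A * (1 - A)⁻¹) := by rw [mul_add, mul_one, add_assoc]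

theorem sum_col_inv_one_sub (hA : IsUnit (1 - A)) (i : ι) :
    ∑ k, (1 - A)⁻¹ k i = 1 + ∑ k, A k i + ∑ k, (A * (A * (1 - A)⁻¹)) k i := calc
  ∑ k, (1 - A)⁻¹ k i = ∑ k, (1 + A + A * (A * (1 - A)⁻¹)) k i := by
    rw [← inv_one_sub_eq_one_add_add_mul hA]
  _ = 1 + ∑ k, A k i + ∑ k, (A * (A * (1 - A)⁻¹)) k i := by
    simp [sum_add_distrib, one_apply]

end Resolvent

theorem matrix_mul_apply_nonneg {l m n R : Type*} [Fintype m] [Semiring R] [PartialOrder R]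
    [IsOrderedRing R] {A : Matrix l m R} {B : Matrix m n R} (hA : ∀ i j, 0 ≤ A i j)
    (hB : ∀ i j, 0 ≤ B i j) (i : l) (j : n) : 0 ≤ (A * B) i j := by
  rw [mul_apply]
  exact sum_nonneg fun k _ => mul_nonneg (hA i k) (hB k j)

section Substochastic

variable {ι R : Type*} [Fintype ι] [Field R] [LinearOrder R]

/-- A nonnegative square matrix all of whose row sums are at most `a`; `a = 1` is the usual notion
of a (row-)substochastic matrix. For `a < 1` the resolvent `(1 - A)⁻¹` exists and is nonnegative. -/
structure IsSubstochastic (A : Matrix ι ι R) (a : R) : Prop where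
  nonneg : ∀ i j, 0 ≤ A i j
  sum_row_le : ∀ i, ∑ j, A i j ≤ a

namespace IsSubstochastic

variable [IsStrictOrderedRing R] {A : Matrix ι ι R} {a : R}

-- Maximum principle: compare both sides of `hv` at an index where `v` is smallest.
theorem nonneg_of_mulVec_le (hA : IsSubstochastic A a) (ha : a < 1) {v : ι → R}
    (hv : A *ᵥ v ≤ v) : 0 ≤ v := by
  intro i
  obtain ⟨m, -, hmin⟩ := exists_min_image univ v ⟨i, mem_univ i⟩
  have hm : (∑ j, A m j) * v m ≤ v m := calc
    (∑ j, A m j) * v m = ∑ j, A m j * v m := sum_mul ..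
    _ ≤ ∑ j, A m j * v j :=
      sum_le_sum fun j hj => mul_le_mul_of_nonneg_left (hmin j hj) (hA.nonneg m j)
    _ ≤ v m := hv m
  have hvm : 0 ≤ v m := by
    have hrow : 0 < 1 - ∑ j, A m j := sub_pos.2 ((hA.sum_row_le m).trans_lt ha)
    rw [← mul_nonneg_iff_of_pos_left hrow, one_sub_mul]
    exact sub_nonneg.2 hm
  exact hvm.trans (hmin i (mem_univ i))

theorem mul_apply_le {κ : Type*} (hA : IsSubstochastic A a) {B : Matrix ι κ R} {c : R}
    (hc : 0 ≤ c) (hB : ∀ i j, B i j ≤ c) (i : ι) (j : κ) : (A * B) i j ≤ a * c := calc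
  (A * B) i j = ∑ k, A i k * B k j := mul_apply
  _ ≤ ∑ k, A i k * c := sum_le_sum fun k _ => mul_le_mul_of_nonneg_left (hB k j) (hA.nonneg i k)
  _ = (∑ k, A i k) * c := (sum_mul ..).symm
  _ ≤ a * c := mul_le_mul_of_nonneg_right (hA.sum_row_le i) hc

variable [DecidableEq ι]

theorem isUnit_one_sub (hA : IsSubstochastic A a) (ha : a < 1) : IsUnit (1 - A) := by
  rw [← mulVec_injective_iff_isUnit]
  have hle {v w : ι → R} (h : (1 - A) *ᵥ v = (1 - A) *ᵥ w) : v ≤ w := by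
    refine sub_nonneg.1 (hA.nonneg_of_mulVec_le ha (le_of_eq ?_))
    simp only [sub_mulVec, one_mulVec] at h
    rw [mulVec_sub]
    linear_combination h
  exact fun v w h => (hle h).antisymm (hle h.symm)

theorem inv_one_sub_apply_nonneg (hA : IsSubstochastic A a) (ha : a < 1) (i j : ι) :
    0 ≤ (1 - A)⁻¹ i j := by
  refine hA.nonneg_of_mulVec_le ha (v := fun k => (1 - A)⁻¹ k j) (fun k => ?_) i
  calc (A * (1 - A)⁻¹) k j ≤ (1 : Matrix ι ι R) k j + (A * (1 - A)⁻¹) k j :=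
        le_add_of_nonneg_left (by rw [one_apply]; positivity)
    _ = (1 - A)⁻¹ k j := (congr_fun₂ (inv_one_sub_eq_one_add_mul (hA.isUnit_one_sub ha)) k j).symm

theorem inv_one_sub_apply_le (hA : IsSubstochastic A a) (ha : a < 1) (i j : ι) :
    (1 - A)⁻¹ i j ≤ 1 / (1 - a) := by
  have hfix : a * (1 / (1 - a)) = 1 / (1 - a) - 1 := by
    linear_combination -mul_one_div_cancel (sub_pos.2 ha).ne'
  refine sub_nonneg.1 (hA.nonneg_of_mulVec_le ha (v := fun k => 1 / (1 - a) - (1 - A)⁻¹ k j)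
    (fun k => ?_) i)
  have hN : (1 - A)⁻¹ k j = (1 : Matrix ι ι R) k j + (A * (1 - A)⁻¹) k j :=
    congr_fun₂ (inv_one_sub_eq_one_add_mul (hA.isUnit_one_sub ha)) k j
  have hone : (1 : Matrix ι ι R) k j ≤ 1 := by
    rw [one_apply]
    split_ifs <;> simp
  calc ∑ l, A k l * (1 / (1 - a) - (1 - A)⁻¹ l j)
      = (∑ l, A k l) * (1 / (1 - a)) - (A * (1 - A)⁻¹) k j := by
        simp only [mul_sub, sum_sub_distrib, sum_mul, mul_apply]
    _ ≤ a * (1 / (1 - a)) - (A * (1 - A)⁻¹) k j := by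
        gcongr
        exact hA.sum_row_le k
    _ ≤ 1 / (1 - a) - (1 - A)⁻¹ k j := by linarith

theorem one_add_sum_col_le_sum_col_inv_one_sub (hA : IsSubstochastic A a) (ha : a < 1) (i : ι) :
    1 + ∑ k, A k i ≤ ∑ k, (1 - A)⁻¹ k i := by
  rw [sum_col_inv_one_sub (hA.isUnit_one_sub ha)]
  exact le_add_of_nonneg_right (sum_nonneg fun k _ =>
    matrix_mul_apply_nonneg hA.nonneg
      (matrix_mul_apply_nonneg hA.nonneg (hA.inv_one_sub_apply_nonneg ha)) k i)

theorem sum_col_inv_one_sub_le (hA : IsSubstochastic A a) (ha₀ : 0 ≤ a) (ha : a < 1) (i : ι) :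
    ∑ k, (1 - A)⁻¹ k i ≤ 1 + ∑ k, A k i + Fintype.card ι * (a ^ 2 / (1 - a)) := by
  have hc : 0 ≤ 1 / (1 - a) := one_div_nonneg.2 (sub_pos.2 ha).le
  have hrem (k : ι) : (A * (A * (1 - A)⁻¹)) k i ≤ a ^ 2 / (1 - a) := calc
    (A * (A * (1 - A)⁻¹)) k i ≤ a * (a * (1 / (1 - a))) :=
      hA.mul_apply_le (mul_nonneg ha₀ hc) (hA.mul_apply_le hc (hA.inv_one_sub_apply_le ha)) k i
    _ = a ^ 2 / (1 - a) := by ring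
  rw [sum_col_inv_one_sub (hA.isUnit_one_sub ha), ← nsmul_eq_mul]
  gcongr
  exact sum_le_card_nsmul _ _ _ fun k _ => hrem k

end IsSubstochastic

end Substochastic

theorem mul_sq_div_lt_mul_of_div_add_lt {K : Type*} [Field K] [LinearOrder K]
    [IsStrictOrderedRing K] {m δ θ : K} (hm : 0 ≤ m) (hδ : 0 < δ)
    (hθlo : m / (δ + m) < θ) (hθhi : θ < 1) :
    m * ((1 - θ) ^ 2 / θ) < (1 - θ) * δ := by
  have hθ : 0 < θ := lt_of_le_of_lt (by positivity) hθlo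
  have hgap : m * (1 - θ) < δ * θ := by
    rw [div_lt_iff₀ (by positivity)] at hθlo
    linarith
  calc m * ((1 - θ) ^ 2 / θ) = (1 - θ) * (m * (1 - θ) / θ) := by ring
    _ < (1 - θ) * δ := mul_lt_mul_of_pos_left ((div_lt_iff₀ hθ).2 hgap) (sub_pos.2 hθhi)

section SocialPower

variable {n : ℕ} {W : Matrix (Fin n) (Fin n) ℝ} {ω : ℝ}

/-- The paper's `g_i`: the total weight agent `i` receives from all agents, with its own weight
discounted by the factor `1 - ω` since the link to the influencer takes the share `ω`. -/
def firstOrderInfluence (W : Matrix (Fin n) (Fin n) ℝ) (ω : ℝ) (i : Fin n) : ℝ :=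
  (1 - ω) * W i i + ∑ j ∈ univ.erase i, W j i

theorem Hmat_apply (W : Matrix (Fin n) (Fin n) ℝ) (θ : Fin n → ℝ) (ω : ℝ) (S : Finset (Fin n))
    (k l : Fin n) :
    Hmat W θ ω S k l = (1 - if k ∈ S then ω else 0) * ((1 - θ k) * W k l) := by
  rw [Hmat, ← diagonal_one, diagonal_sub, diagonal_sub, diagonal_mul, diagonal_mul]

theorem isSubstochastic_Hmat (hW : IsSubstochastic W 1) (hω : ω ∈ Set.Icc 0 1) {θ : Fin n → ℝ}
    {t : ℝ} (hθ : ∀ k, θ k ∈ Set.Icc t 1) (S : Finset (Fin n)) :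
    IsSubstochastic (Hmat W θ ω S) (1 - t) := by
  have hS (k : Fin n) : (1 - if k ∈ S then ω else 0) ∈ Set.Icc 0 1 := by
    split_ifs
    · exact ⟨sub_nonneg.2 hω.2, sub_le_self 1 hω.1⟩
    · simp
  have hWθ (k l : Fin n) : 0 ≤ (1 - θ k) * W k l :=
    mul_nonneg (sub_nonneg.2 (hθ k).2) (hW.nonneg k l)
  refine ⟨fun k l => ?_, fun k => ?_⟩
  · rw [Hmat_apply]
    exact mul_nonneg (hS k).1 (hWθ k l)
  · calc ∑ l, Hmat W θ ω S k l
        = ∑ l, (1 - if k ∈ S then ω else 0) * ((1 - θ k) * W k l) := by simp only [Hmat_apply]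
      _ ≤ ∑ l, (1 - θ k) * W k l :=
        sum_le_sum fun l _ => mul_le_of_le_one_left (hWθ k l) (hS k).2
      _ = (1 - θ k) * ∑ l, W k l := (mul_sum ..).symm
      _ ≤ 1 - θ k := mul_le_of_le_one_right (sub_nonneg.2 (hθ k).2) (hW.sum_row_le k)
      _ ≤ 1 - t := sub_le_sub_left (hθ k).1 1

theorem sum_col_Hmat_singleton (W : Matrix (Fin n) (Fin n) ℝ) (θ ω : ℝ) (i : Fin n) :
    ∑ k, Hmat W (fun _ => θ) ω {i} k i = (1 - θ) * firstOrderInfluence W ω i := by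
  have hoff : ∀ k ∈ univ.erase i, Hmat W (fun _ => θ) ω {i} k i = (1 - θ) * W k i := by
    intro k hk
    simp [Hmat_apply, ne_of_mem_erase hk]
  rw [← add_sum_erase _ _ (mem_univ i), sum_congr rfl hoff, ← mul_sum, Hmat_apply,
    if_pos (mem_singleton_self i), firstOrderInfluence]
  ring

theorem p0vec_singleton_apply (W : Matrix (Fin n) (Fin n) ℝ) (θ : Fin n → ℝ) (ω : ℝ)
    (i k : Fin n) :
    p0vec W θ ω {i} k = (1 - θ i) * ω * (1 - Hmat W θ ω {i})⁻¹ k i := by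
  rw [p0vec, ← diagonal_one, diagonal_sub, diagonal_one, mulVec, dotProduct]
  simp only [mul_diagonal, mem_singleton, mul_ite, mul_zero, sum_ite_eq', mem_univ, if_true]
  ring

theorem sp0_singleton (W : Matrix (Fin n) (Fin n) ℝ) (θ : Fin n → ℝ) (ω : ℝ) (i : Fin n) :
    sp0 W θ ω {i} =
      ((1 - θ i) * ω * ∑ k, (1 - Hmat W θ ω {i})⁻¹ k i + 1) / (n + 1) := by
  simp only [sp0, p0vec_singleton_apply, mul_sum]

theorem big_stubbornness_optimal_singleton_general (hW : IsSubstochastic W 1)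
    (hω : ω ∈ Set.Ioc 0 1) {i j : Fin n} {δ : ℝ} (hδ : 0 < δ)
    (hgap : δ ≤ firstOrderInfluence W ω j - firstOrderInfluence W ω i)
    {θ : ℝ} (hθlo : n / (δ + n) < θ) (hθhi : θ < 1) :
    sp0 W (fun _ => θ) ω {i} < sp0 W (fun _ => θ) ω {j} := by
  have hθ : 0 < θ := lt_of_le_of_lt (by positivity) hθlo
  have h1θ : 0 < 1 - θ := sub_pos.2 hθhi
  have hH (k : Fin n) : IsSubstochastic (Hmat W (fun _ => θ) ω {k}) (1 - θ) :=
    isSubstochastic_Hmat hW ⟨hω.1.le, hω.2⟩ (fun _ => ⟨le_rfl, hθhi.le⟩) {k}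
  have hlt : 1 - θ < 1 := sub_lt_self 1 hθ
  have hupper := (hH i).sum_col_inv_one_sub_le h1θ.le hlt i
  have hlower := (hH j).one_add_sum_col_le_sum_col_inv_one_sub hlt j
  rw [sum_col_Hmat_singleton, Fintype.card_fin, sub_sub_cancel] at hupper
  rw [sum_col_Hmat_singleton] at hlower
  have hrem := mul_sq_div_lt_mul_of_div_add_lt n.cast_nonneg hδ hθlo hθhi
  have hfirst := mul_le_mul_of_nonneg_left hgap h1θ.le
  have hcol : ∑ k, (1 - Hmat W (fun _ => θ) ω {i})⁻¹ k i
      < ∑ k, (1 - Hmat W (fun _ => θ) ω {j})⁻¹ k j := by linarith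
  rw [sp0_singleton, sp0_singleton]
  have hω0 : 0 < ω := hω.1
  gcongr

end SocialPower

/-- For large homogeneous stubbornness, the agent `i*` maximizing
`g_i = (1-ω) W_{ii} + Σ_{j≠i} W_{ji}` is the unique optimal singleton choice. -/
theorem big_stubbornness_optimal_singleton
    (n : ℕ) (hn : 1 ≤ n) (W : Matrix (Fin n) (Fin n) ℝ)
    (hW0 : ∀ i j, 0 ≤ W i j) (hW1 : ∀ i, ∑ j, W i j = 1)
    (hconn : ∀ i j : Fin n, ∃ k, 1 ≤ k ∧ 0 < (W ^ k) i j)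
    (ω : ℝ) (hω : ω ∈ Set.Ioo (0 : ℝ) 1)
    (g : Fin n → ℝ)
    (hg : ∀ i, g i = (1 - ω) * W i i + ∑ j ∈ Finset.univ.erase i, W j i)
    (istar : Fin n) (hstar : ∀ i, i ≠ istar → g i < g istar)
    (δg : ℝ) (hδg : IsLeast {d : ℝ | ∃ i, i ≠ istar ∧ d = g istar - g i} δg)
    (θ : ℝ) (hθlo : (n : ℝ) / (δg + n) < θ) (hθhi : θ < 1) :
    ∀ i, i ≠ istar → sp0 W (fun _ => θ) ω {i} < sp0 W (fun _ => θ) ω {istar} := by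
  obtain rfl : g = firstOrderInfluence W ω := funext hg
  have hδ : 0 < δg := by
    obtain ⟨i, hi, rfl⟩ := hδg.1
    exact sub_pos.2 (hstar i hi)
  exact fun i hi => big_stubbornness_optimal_singleton_general ⟨hW0, fun i => (hW1 i).le⟩
    ⟨hω.1, hω.2.le⟩ hδ (hδg.2 ⟨i, hi, rfl⟩) hθlo hθhi
end

section
/- Suppose the weight matrix has rank one: W = 𝟙 cᵀ, where c ∈ ℝⁿ satisfies c_j > 0 for all j and Σ_j c_j = 1. Let θ_i ∈ [0,1] for all i, assume Σ_{j∈V} c_j θ_j > 0, and let ω ∈ (0,1). Then for every S ⊆ V, the matrix I − H(S) is invertible and the influencer's social power equals sp₀(S) = 1/(n+1) + ω [ (Σ_{j∈V} c_j θ_j)(Σ_{j∈S} (1 − θ_j)) + (Σ_{j∈V} (1 − θ_j))(Σ_{j∈S} c_j (1 − θ_j)) ] / [ (n+1) ( Σ_{j∈V} c_j θ_j + ω Σ_{j∈S} c_j (1 − θ_j) ) ]. -/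
open Matrix Finset

/-- The rank-one matrix `𝟙 cᵀ`. -/
def rankOne {n : ℕ} (c : Fin n → ℝ) : Matrix (Fin n) (Fin n) ℝ :=
  Matrix.of fun _ j => c j

/-!
For `W = 𝟙 cᵀ` the matrix `H(S)` is the rank-one matrix `u cᵀ` with `u = 𝟙 - θ - b`, where
`b = (I - Θ) ω Σ_{j∈S} e_j` is the right-hand side of the system defining `p₀(S)`. Since
`Σ_j c_j = 1`, the Sherman–Morrison denominator `1 - cᵀu` is `Σ_j c_j θ_j + cᵀb`, and
`p₀(S) = b + (cᵀb / (1 - cᵀu)) u`.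
-/

section RankOneUpdate

variable {ι K : Type*} [Fintype ι] [DecidableEq ι] [Field K] {u c : ι → K}

theorem one_sub_vecMulVec_mul_one_add_smul_vecMulVec (h : 1 - c ⬝ᵥ u ≠ 0) :
    (1 - vecMulVec u c) * (1 + (1 - c ⬝ᵥ u)⁻¹ • vecMulVec u c) = 1 := by
  have h_sq : vecMulVec u c * vecMulVec u c = (c ⬝ᵥ u) • vecMulVec u c := by
    rw [vecMulVec_mul_vecMulVec, vecMulVec_smul]
  calc (1 - vecMulVec u c) * (1 + (1 - c ⬝ᵥ u)⁻¹ • vecMulVec u c)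
      = 1 + ((1 - c ⬝ᵥ u)⁻¹ * (1 - c ⬝ᵥ u) - 1) • vecMulVec u c := by
        rw [sub_mul, one_mul, mul_add, mul_one, mul_smul_comm, h_sq]
        module
    _ = 1 := by rw [inv_mul_cancel₀ h, sub_self, zero_smul, add_zero]

theorem isUnit_one_sub_vecMulVec (h : 1 - c ⬝ᵥ u ≠ 0) : IsUnit (1 - vecMulVec u c) :=
  .of_mul_eq_one _ (one_sub_vecMulVec_mul_one_add_smul_vecMulVec h)

theorem inv_one_sub_vecMulVec_mulVec (h : 1 - c ⬝ᵥ u ≠ 0) (b : ι → K) :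
    (1 - vecMulVec u c)⁻¹ *ᵥ b = b + (c ⬝ᵥ b / (1 - c ⬝ᵥ u)) • u := by
  rw [inv_eq_right_inv (one_sub_vecMulVec_mul_one_add_smul_vecMulVec h), add_mulVec, one_mulVec,
    smul_mulVec, vecMulVec_mulVec, op_smul_eq_smul, smul_smul, div_eq_inv_mul]

end RankOneUpdate

section DirectInfluence

variable {ι R : Type*} [DecidableEq ι] [CommRing R]

/-- The vector `(I - Θ) ω Σ_{j∈S} e_j` of weights with which the influencer enters the opinion
update of each agent directly; it is the right-hand side of the linear system defining `p₀(S)`. -/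
def directInfluence (θ : ι → R) (ω : R) (S : Finset ι) : ι → R :=
  fun i => if i ∈ S then ω * (1 - θ i) else 0

variable [Fintype ι]

theorem dotProduct_directInfluence (v θ : ι → R) (ω : R) (S : Finset ι) :
    v ⬝ᵥ directInfluence θ ω S = ω * ∑ j ∈ S, v j * (1 - θ j) := by
  simp only [dotProduct, directInfluence, mul_ite, mul_zero, sum_ite_mem, univ_inter, mul_sum,
    mul_left_comm]

theorem sum_directInfluence (θ : ι → R) (ω : R) (S : Finset ι) :
    ∑ i, directInfluence θ ω S i = ω * ∑ j ∈ S, (1 - θ j) := by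
  simpa only [one_dotProduct, Pi.one_apply, one_mul] using dotProduct_directInfluence 1 θ ω S

theorem one_sub_dotProduct_one_sub_sub_directInfluence {c : ι → R} (hc1 : ∑ j, c j = 1)
    (θ : ι → R) (ω : R) (S : Finset ι) :
    1 - c ⬝ᵥ (1 - θ - directInfluence θ ω S) =
      (∑ j, c j * θ j) + ω * ∑ j ∈ S, c j * (1 - θ j) := by
  rw [dotProduct_sub, dotProduct_sub, dotProduct_one, hc1, dotProduct_directInfluence, dotProduct]
  ring

end DirectInfluence

theorem sum_mul_add_mul_sum_mul_one_sub_pos {ι R : Type*} [Fintype ι] [Ring R] [PartialOrder R]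
    [IsOrderedRing R] {c θ : ι → R} {ω : R} (hc : ∀ j, 0 ≤ c j) (hθ : ∀ j, θ j ≤ 1)
    (hcθ : 0 < ∑ j, c j * θ j) (hω : 0 ≤ ω) (S : Finset ι) :
    0 < (∑ j, c j * θ j) + ω * ∑ j ∈ S, c j * (1 - θ j) :=
  add_pos_of_pos_of_nonneg hcθ <| mul_nonneg hω <| sum_nonneg fun j _ =>
    mul_nonneg (hc j) (sub_nonneg.2 (hθ j))

section SocialPower

variable {n : ℕ}

theorem Hmat_eq_diagonal_mul (W : Matrix (Fin n) (Fin n) ℝ) (θ : Fin n → ℝ) (ω : ℝ)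
    (S : Finset (Fin n)) :
    Hmat W θ ω S = diagonal (1 - θ - directInfluence θ ω S) * W := by
  rw [Hmat, ← Matrix.mul_assoc, ← diagonal_one, diagonal_sub, diagonal_sub, diagonal_mul_diagonal]
  congr 2 with i
  simp only [directInfluence, Pi.sub_apply, Pi.one_apply]
  split_ifs <;> ring

theorem p0vec_eq_inv_mulVec_directInfluence (W : Matrix (Fin n) (Fin n) ℝ) (θ : Fin n → ℝ) (ω : ℝ)
    (S : Finset (Fin n)) :
    p0vec W θ ω S = (1 - Hmat W θ ω S)⁻¹ *ᵥ directInfluence θ ω S := by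
  rw [p0vec, ← mulVec_mulVec, ← diagonal_one, diagonal_sub]
  congr 1 with i
  simp only [mulVec_diagonal, directInfluence, mul_comm (1 - θ i), ite_mul, zero_mul]

theorem Hmat_rankOne (c θ : Fin n → ℝ) (ω : ℝ) (S : Finset (Fin n)) :
    Hmat (rankOne c) θ ω S = vecMulVec (1 - θ - directInfluence θ ω S) c := by
  ext i j
  rw [Hmat_eq_diagonal_mul, diagonal_mul, rankOne, of_apply, vecMulVec_apply]

theorem sum_p0vec_rankOne {c θ : Fin n → ℝ} {ω : ℝ} {S : Finset (Fin n)} (hc1 : ∑ j, c j = 1)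
    (hD : (∑ j, c j * θ j) + ω * ∑ j ∈ S, c j * (1 - θ j) ≠ 0) :
    ∑ i, p0vec (rankOne c) θ ω S i =
      ω * ((∑ j, c j * θ j) * (∑ j ∈ S, (1 - θ j)) +
          (∑ j, (1 - θ j)) * (∑ j ∈ S, c j * (1 - θ j))) /
        ((∑ j, c j * θ j) + ω * ∑ j ∈ S, c j * (1 - θ j)) := by
  have h_denom := one_sub_dotProduct_one_sub_sub_directInfluence hc1 θ ω S
  rw [p0vec_eq_inv_mulVec_directInfluence, Hmat_rankOne,
    inv_one_sub_vecMulVec_mulVec (h_denom.trans_ne hD), h_denom, dotProduct_directInfluence]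
  simp only [Pi.add_apply, Pi.smul_apply, Pi.sub_apply, Pi.one_apply, smul_eq_mul,
    sum_add_distrib, ← mul_sum, sum_sub_distrib _ (directInfluence θ ω S), sum_directInfluence]
  field_simp
  ring

theorem sp0_rank_one_formula_general {c θ : Fin n → ℝ} {ω : ℝ} {S : Finset (Fin n)}
    (hc1 : ∑ j, c j = 1) (hD : (∑ j, c j * θ j) + ω * ∑ j ∈ S, c j * (1 - θ j) ≠ 0) :
    IsUnit (1 - Hmat (rankOne c) θ ω S) ∧
    sp0 (rankOne c) θ ω S =
      1 / (n + 1) +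
        ω * ((∑ j, c j * θ j) * (∑ j ∈ S, (1 - θ j)) +
          (∑ j, (1 - θ j)) * (∑ j ∈ S, c j * (1 - θ j))) /
        ((n + 1) * ((∑ j, c j * θ j) + ω * ∑ j ∈ S, c j * (1 - θ j))) := by
  constructor
  · rw [Hmat_rankOne]
    refine isUnit_one_sub_vecMulVec ?_
    rwa [one_sub_dotProduct_one_sub_sub_directInfluence hc1]
  · rw [sp0, sum_p0vec_rankOne hc1 hD, add_div, div_div, add_comm, mul_comm ((n : ℝ) + 1)]

end SocialPower

/-- Closed form of the influencer's social power for a rank-one weight matrix. -/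
theorem sp0_rank_one_formula
    (n : ℕ) (hn : 1 ≤ n) (c : Fin n → ℝ) (hc : ∀ j, 0 < c j) (hc1 : ∑ j, c j = 1)
    (θ : Fin n → ℝ) (hθ : ∀ i, θ i ∈ Set.Icc (0 : ℝ) 1) (hcθ : 0 < ∑ j, c j * θ j)
    (ω : ℝ) (hω : ω ∈ Set.Ioo (0 : ℝ) 1) (S : Finset (Fin n)) :
    IsUnit (1 - Hmat (rankOne c) θ ω S) ∧
    sp0 (rankOne c) θ ω S =
      1 / (n + 1) +
        ω * ((∑ j, c j * θ j) * (∑ j ∈ S, (1 - θ j)) +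
          (∑ j, (1 - θ j)) * (∑ j ∈ S, c j * (1 - θ j))) /
        ((n + 1) * ((∑ j, c j * θ j) + ω * ∑ j ∈ S, c j * (1 - θ j))) := by
  exact sp0_rank_one_formula_general hc1
    (sum_mul_add_mul_sum_mul_one_sub_pos (fun j => (hc j).le) (fun j => (hθ j).2) hcθ hω.1.le S).ne'
end
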